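/- Let n ≥ 3 and let F be a regular Euclidean n-gon in ℝ² with vertices v_k = c + R·(cos(θ + 2πk/n), sin(θ + 2πk/n)) for k = 0,…,n−1, where c ∈ ℝ², R > 0 and θ ∈ ℝ. For any two points a, b on the boundary ∂F = ⋃_k [v_k, v_{k+1 mod n}], let ℓ(a,b) be the length of the shorter of the two boundary arcs of ∂F joining a and b. Then ℓ(a,b) ≤ (2 + π/2)·‖a − b‖. -/

import Mathlib

open Real

/-- The vertices of the regular `n`-gon with circumcenter `c`, circumradius `R` and phase
`θ`, indexed by `ℤ` (so that `v (k + n) = v k`). -/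
noncomputable def regularPolygonVertex (n : ℕ) (c : EuclideanSpace ℝ (Fin 2)) (R θ : ℝ)
    (k : ℤ) : EuclideanSpace ℝ (Fin 2) :=
  c + R • (WithLp.equiv 2 (Fin 2 → ℝ)).symm
    ![Real.cos (θ + 2 * π * k / n), Real.sin (θ + 2 * π * k / n)]

/-- The arc-length parametrization of the boundary of the regular `n`-gon: for
`u ∈ [k·L, (k+1)·L]` (where `L` is the side length), the point `γ u` travels along the
side from vertex `k` to vertex `k + 1` at unit speed. -/
noncomputable def regularPolygonBoundary (n : ℕ) (c : EuclideanSpace ℝ (Fin 2)) (R θ : ℝ)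
    (u : ℝ) : EuclideanSpace ℝ (Fin 2) :=
  let v := regularPolygonVertex n c R θ
  let L : ℝ := ‖v 1 - v 0‖
  v ⌊u / L⌋ + (u / L - (⌊u / L⌋ : ℝ)) • (v (⌊u / L⌋ + 1) - v ⌊u / L⌋)

lemma rp_sin (n : ℕ) (hn : 3 ≤ n) (m : ℤ) (h0 : 0 ≤ m) (h1 : 2 * m ≤ n + 2) :
    (m : ℝ) * sin (π / n) ≤ (2 + π / 2) * sin (m * (π / n)) := by
  have hp3 := Real.pi_gt_three
  have hp4 := Real.pi_lt_d2
  have hnR : (3 : ℝ) ≤ n := by exact_mod_cast hn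
  have hn0 : (0 : ℝ) < n := by linarith
  have hm0 : (0 : ℝ) ≤ m := by exact_mod_cast h0
  have hm1 : 2 * (m : ℝ) ≤ n + 2 := by exact_mod_cast h1
  set x := π / n with hx
  have hx0 : 0 < x := by positivity
  have hnx : n * x = π := by rw [hx]; field_simp
  have hsx : sin x ≤ x := Real.sin_le hx0.le
  have hmx : 0 ≤ m * x := by positivity
  by_cases hc : m * x ≤ π / 2
  · have h2 := Real.mul_le_sin hmx hc
    have h3 : (2 + π / 2) * (2 / π * (m * x)) ≤ (2 + π / 2) * sin (m * x) := by gcongr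
    have h4 : (2 + π / 2) * (2 / π * (m * x)) = (4 / π + 1) * (m * x) := by
      field_simp; ring
    have h5 : 0 ≤ 4 / π * (m * x) := by positivity
    have h6 : m * sin x ≤ m * x := by gcongr
    linarith
  · push Not at hc
    by_cases h4 : n = 3
    · subst h4
      have hm2 : m = 2 := by
        have : (1 : ℝ) < m := by
          push_cast at hnx
          nlinarith
        have : (1 : ℤ) < m := by exact_mod_cast this
        push_cast at h1
        omega
      subst hm2
      have e : ((2 : ℤ) : ℝ) * x = π - x := by push_cast at hnx ⊢; linarith
      rw [e, Real.sin_pi_sub]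
      have : 0 ≤ sin x := Real.sin_nonneg_of_nonneg_of_le_pi hx0.le (by push_cast at hnx; linarith)
      push_cast
      gcongr
      linarith
    · have hn4 : (4 : ℝ) ≤ n := by
        have : 4 ≤ n := by omega
        exact_mod_cast this
      have hx4 : x ≤ π / 4 := by nlinarith
      have hmb : m * x ≤ π / 2 + x := by nlinarith
      have h7 : cos x ≤ sin (m * x) := by
        have e : sin (m * x) = cos (m * x - π / 2) := by rw [Real.cos_sub_pi_div_two]
        rw [e]
        exact Real.cos_le_cos_of_nonneg_of_le_pi (by linarith) (by linarith) (by linarith)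
      have h8 : cos (π / 4) ≤ cos x :=
        Real.cos_le_cos_of_nonneg_of_le_pi hx0.le (by linarith) hx4
      rw [Real.cos_pi_div_four] at h8
      have h9 : (1.4 : ℝ) ≤ √2 := Real.le_sqrt_of_sq_le (by norm_num)
      have h10 : (0.7 : ℝ) ≤ sin (m * x) := by linarith
      have h6 : m * sin x ≤ m * x := by gcongr
      nlinarith

lemma rp_dot (p q ψ : ℝ) : p * cos ψ + q * sin ψ ≤ √(p ^ 2 + q ^ 2) := by
  apply Real.le_sqrt_of_sq_le
  nlinarith [sq_nonneg (p * sin ψ - q * cos ψ), Real.sin_sq_add_cos_sq ψ]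

lemma rp_L (n : ℕ) (hn : 3 ≤ n) (c : EuclideanSpace ℝ (Fin 2)) (R θ : ℝ) (hR : 0 < R) :
    ‖regularPolygonVertex n c R θ 1 - regularPolygonVertex n c R θ 0‖ = 2 * R * sin (π / n) := by
  have hnR : (3 : ℝ) ≤ n := by exact_mod_cast hn
  have hsin : 0 ≤ sin (π / n) := Real.sin_nonneg_of_nonneg_of_le_pi (by positivity)
    (div_le_self Real.pi_pos.le (by linarith))
  rw [EuclideanSpace.norm_eq, Real.sqrt_eq_iff_mul_self_eq (by positivity) (by positivity)]
  simp only [regularPolygonVertex, Fin.sum_univ_two, Real.norm_eq_abs, sq_abs]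
  simp
  have e : θ + 2 * π / n = (θ + π / n) + π / n := by ring
  have e' : θ = (θ + π / n) - π / n := by ring
  rw [e]
  generalize θ + π / n = A at e' ⊢
  rw [e']
  simp only [Real.cos_add, Real.sin_add, Real.cos_sub, Real.sin_sub]
  linear_combination (4 * R ^ 2 * sin (π / n) ^ 2) * Real.sin_sq_add_cos_sq A

lemma rp_per (n : ℕ) (hn : 3 ≤ n) (c : EuclideanSpace ℝ (Fin 2)) (R θ : ℝ) (k : ℤ) :
    regularPolygonVertex n c R θ (k + n) = regularPolygonVertex n c R θ k := by
  have hn0 : (n : ℝ) ≠ 0 := by positivity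
  have e : θ + 2 * π * ((k + n : ℤ) : ℝ) / n = θ + 2 * π * k / n + 2 * π := by
    push_cast; field_simp; ring
  simp only [regularPolygonVertex, e, Real.cos_add_two_pi, Real.sin_add_two_pi]

lemma rp_main (n : ℕ) (hn : 3 ≤ n) (c : EuclideanSpace ℝ (Fin 2)) (R θ : ℝ) (hR : 0 < R)
    (j k : ℤ) (a b : ℝ) (ha0 : 0 ≤ a) (ha1 : a ≤ 1) (hb0 : 0 ≤ b) (hb1 : b ≤ 1)
    (hjk : j ≤ k) (hd : 2 * (k - j) ≤ n) (v : ℤ → EuclideanSpace ℝ (Fin 2))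
    (hv : v = regularPolygonVertex n c R θ) :
    (k + b - (j + a)) * (2 * R * sin (π / n)) ≤ (2 + π / 2) *
      ‖(v k + b • (v (k + 1) - v k)) - (v j + a • (v (j + 1) - v j))‖ := by
  have hnR : (3 : ℝ) ≤ n := by exact_mod_cast hn
  have hp3 := Real.pi_gt_three
  have hsin : 0 ≤ sin (π / n) := Real.sin_nonneg_of_nonneg_of_le_pi (by positivity)
    (div_le_self Real.pi_pos.le (by linarith))
  set w := (v k + b • (v (k + 1) - v k)) - (v j + a • (v (j + 1) - v j)) with hw
  have key : R * ((a + 1 - b) * sin (((k - j - 1 : ℤ) : ℝ) * (π / n))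
      + (1 - a + b) * sin (((k - j + 1 : ℤ) : ℝ) * (π / n))) ≤ ‖w‖ := by
    have h := rp_dot (w 0) (w 1) (θ + (j + k) * (π / n) + π / n + π / 2)
    have hn : ‖w‖ = √(w 0 ^ 2 + w 1 ^ 2) := by
      rw [EuclideanSpace.norm_eq]; simp [Fin.sum_univ_two]
    rw [← hn] at h
    refine le_trans (le_of_eq ?_) h
    rw [hw, hv]
    simp only [regularPolygonVertex]
    simp
    rw [Real.cos_add_pi_div_two, Real.sin_add_pi_div_two]
    set x := π / n with hx
    have e1 : θ + 2 * π * k / n = (θ + (j + k) * x + x) + (k - j - 1) * x := by rw [hx]; ring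
    have e2 : θ + 2 * π * (k + 1) / n = (θ + (j + k) * x + x) + (k - j + 1) * x := by
      rw [hx]; ring
    have e3 : θ + 2 * π * j / n = (θ + (j + k) * x + x) - (k - j + 1) * x := by rw [hx]; ring
    have e4 : θ + 2 * π * (j + 1) / n = (θ + (j + k) * x + x) - (k - j - 1) * x := by
      rw [hx]; ring
    rw [e1, e2, e3, e4]
    generalize θ + (j + k) * x + x = A
    generalize ((k : ℝ) - j - 1) * x = B
    generalize ((k : ℝ) - j + 1) * x = D
    simp only [Real.cos_add, Real.sin_add, Real.cos_sub, Real.sin_sub]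
    linear_combination (-R * ((a + 1 - b) * sin B + (1 - a + b) * sin D)) *
      Real.sin_sq_add_cos_sq A
  rcases hjk.eq_or_lt with h | h
  · subst h
    have e : R * ((a + 1 - b) * sin (((j - j - 1 : ℤ) : ℝ) * (π / n))
      + (1 - a + b) * sin (((j - j + 1 : ℤ) : ℝ) * (π / n)))
      = (j + b - (j + a)) * (2 * R * sin (π / n)) := by
      simp
      ring
    rw [e] at key
    have := norm_nonneg w
    nlinarith
  · have h1 := rp_sin n hn (k - j - 1) (by omega) (by omega)
    have h2 := rp_sin n hn (k - j + 1) (by omega) (by omega)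
    have g1 := mul_le_mul_of_nonneg_left h1 (show 0 ≤ R * (a + 1 - b) from
      mul_nonneg hR.le (by linarith))
    have g2 := mul_le_mul_of_nonneg_left h2 (show 0 ≤ R * (1 - a + b) from
      mul_nonneg hR.le (by linarith))
    have g3 := mul_le_mul_of_nonneg_left key (show 0 ≤ 2 + π / 2 by linarith)
    refine le_trans ?_ g3
    refine le_trans (le_of_eq ?_) ((add_le_add g1 g2).trans (le_of_eq ?_))
    · push_cast; ring
    · ring

lemma rp_wlog (n : ℕ) (hn : 3 ≤ n) (c : EuclideanSpace ℝ (Fin 2)) (R θ : ℝ) (hR : 0 < R)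
    (L : ℝ) (hL : L = 2 * R * sin (π / n)) (s t : ℝ) (hst : s ≤ t) (hs : 0 ≤ s)
    (ht : t ≤ n * L) :
    min (t - s) (n * L - (t - s)) ≤ (2 + π / 2) *
      ‖regularPolygonBoundary n c R θ t - regularPolygonBoundary n c R θ s‖ := by
  have hnR : (3 : ℝ) ≤ n := by exact_mod_cast hn
  have hsin : 0 < sin (π / n) := Real.sin_pos_of_pos_of_lt_pi (by positivity)
    (div_lt_self Real.pi_pos (by linarith))
  have hL0 : 0 < L := by rw [hL]; positivity
  simp only [regularPolygonBoundary]
  rw [rp_L n hn c R θ hR, ← hL]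
  have hjk : ⌊s / L⌋ ≤ ⌊t / L⌋ := Int.floor_le_floor (by gcongr)
  have hj : 0 ≤ ⌊s / L⌋ := Int.floor_nonneg.2 (by positivity)
  have hk : ⌊t / L⌋ ≤ n := by
    have : t / L ≤ n := by rwa [div_le_iff₀ hL0]
    have := (Int.floor_le (t / L)).trans this
    exact_mod_cast this
  have es : s / L * L = s := by field_simp
  have et : t / L * L = t := by field_simp
  have s1 := Int.floor_le (s / L)
  have s2 := (Int.lt_floor_add_one (s / L)).le
  have t1 := Int.floor_le (t / L)
  have t2 := (Int.lt_floor_add_one (t / L)).le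
  generalize ⌊s / L⌋ = j at *
  generalize ⌊t / L⌋ = k at *
  by_cases hd : 2 * (k - j) ≤ n
  · refine (min_le_left _ _).trans ?_
    have := rp_main n hn c R θ hR j k (s / L - j) (t / L - k) (by linarith) (by linarith)
      (by linarith) (by linarith) hjk hd _ rfl
    rw [← hL] at this
    refine le_trans (le_of_eq ?_) this
    linear_combination es - et
  · refine (min_le_right _ _).trans ?_
    have := rp_main n hn c R θ hR k (j + n) (t / L - k) (s / L - j) (by linarith) (by linarith)
      (by linarith) (by linarith) (by omega) (by omega) _ rfl
    rw [← hL, show j + (n : ℤ) + 1 = (j + 1) + n by ring, rp_per n hn, rp_per n hn,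
      norm_sub_rev] at this
    refine le_trans (le_of_eq ?_) this
    push_cast
    linear_combination et - es

/-- if `a`, `b` are two points on the boundary of a regular Euclidean
`n`-gon `F` (`n ≥ 3`), then the length `ℓ(a,b)` of the shorter of the two boundary arcs
of `∂F` joining `a` and `b` satisfies `ℓ(a,b) ≤ (2 + π/2)·‖a - b‖`. Here the boundary is
parametrized by arc length by `γ` with period the perimeter `P = n·L`, so two points
`a = γ s`, `b = γ t` with `s, t ∈ [0, P]` split `∂F` into two arcs of lengths `|s - t|`
and `P - |s - t|`. -/
theorem regular_polygon_boundary_shortcut (n : ℕ) (hn : 3 ≤ n)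
    (c : EuclideanSpace ℝ (Fin 2)) (R θ : ℝ) (hR : 0 < R)
    (v : ℤ → EuclideanSpace ℝ (Fin 2)) (hv : v = regularPolygonVertex n c R θ)
    (L P : ℝ) (hL : L = ‖v 1 - v 0‖) (hP : P = n * L)
    (γ : ℝ → EuclideanSpace ℝ (Fin 2)) (hγ : γ = regularPolygonBoundary n c R θ)
    (s t : ℝ) (hs : s ∈ Set.Icc 0 P) (ht : t ∈ Set.Icc 0 P) :
    min |s - t| (P - |s - t|) ≤ (2 + π / 2) * ‖γ s - γ t‖ := by
  subst hγ
  subst hP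
  rw [hv, rp_L n hn c R θ hR] at hL
  rcases le_total s t with h | h
  · rw [abs_sub_comm, abs_of_nonneg (sub_nonneg.2 h), norm_sub_rev]
    exact rp_wlog n hn c R θ hR L hL s t h hs.1 ht.2
  · rw [abs_of_nonneg (sub_nonneg.2 h)]
    exact rp_wlog n hn c R θ hR L hL t s h ht.1 hs.2
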